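/- The image in PGL(3,ℂ) of the subgroup ⟨σ, τ, λ₂₀⟩ ⊆ GL(3,ℂ) under the canonical projection GL(3,ℂ) → PGL(3,ℂ) has order 1200, and there exists a group homomorphism φ : ℤ/2 → Aut(SL(2,5)) such that this image is isomorphic to (SL(2,5) ⋊_φ ℤ/2) × ℤ/5. -/

import Mathlib

noncomputable section
open Matrix

def zeta5 : ℂ := Complex.exp (2 * Real.pi * Complex.I / 5)

def sqrt5 : ℂ := zeta5 - zeta5 ^ 2 - zeta5 ^ 3 + zeta5 ^ 4

def alpha : Matrix (Fin 2) (Fin 2) ℂ := -(Matrix.of ![![zeta5 ^ 3, 0], ![0, zeta5 ^ 2]])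
def beta : Matrix (Fin 2) (Fin 2) ℂ := Matrix.of ![![0, 1], ![-1, 0]]
def gamma : Matrix (Fin 2) (Fin 2) ℂ :=
  (zeta5 ^ 2 - zeta5 ^ 3)⁻¹ •
    Matrix.of ![![zeta5 + zeta5⁻¹, 1], ![1, -(zeta5 + zeta5⁻¹)]]

/-- The block-diagonal embedding of a `2 × 2` matrix into `GL(3)`, with last diagonal entry 1. -/
def emb (A : Matrix (Fin 2) (Fin 2) ℂ) : Matrix (Fin 3) (Fin 3) ℂ :=
  Matrix.of ![![A 0 0, A 0 1, 0], ![A 1 0, A 1 1, 0], ![0, 0, 1]]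

def alpha' : Matrix (Fin 3) (Fin 3) ℂ := emb alpha
def beta' : Matrix (Fin 3) (Fin 3) ℂ := emb beta
def gamma' : Matrix (Fin 3) (Fin 3) ℂ := emb gamma

def sigma : Matrix (Fin 3) (Fin 3) ℂ :=
  Matrix.of ![![(zeta5 - zeta5 ^ 4) / sqrt5, (zeta5 ^ 3 - zeta5 ^ 2) / sqrt5, 0],
    ![(zeta5 ^ 3 - zeta5 ^ 2) / sqrt5, -((zeta5 - zeta5 ^ 4) / sqrt5), 0],
    ![0, 0, 1]]

def tau : Matrix (Fin 3) (Fin 3) ℂ := Matrix.diagonal ![zeta5, 1, 1]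

def rho : Matrix (Fin 3) (Fin 3) ℂ := Matrix.diagonal ![zeta5 ^ 3, zeta5 ^ 2, 1]

/-- The subgroup of `GL(3, ℂ)` generated by the invertible matrices in `S`. -/
def gen3 (S : Set (Matrix (Fin 3) (Fin 3) ℂ)) : Subgroup (GL (Fin 3) ℂ) :=
  Subgroup.closure {g : GL (Fin 3) ℂ | (g : Matrix (Fin 3) (Fin 3) ℂ) ∈ S}

/-- `S(2,1) = ⟨α', β', γ'⟩`. -/
def S21 : Subgroup (GL (Fin 3) ℂ) := gen3 {alpha', beta', gamma'}

abbrev SL25 := Matrix.SpecialLinearGroup (Fin 2) (ZMod 5)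

/-- The subgroup of nonzero scalar matrices in `GL(3, ℂ)`. -/
def scalarSub : Subgroup (GL (Fin 3) ℂ) :=
  (Units.map (algebraMap ℂ (Matrix (Fin 3) (Fin 3) ℂ)).toMonoidHom).range

instance : scalarSub.Normal := by
  constructor
  rintro n ⟨c, rfl⟩ g
  refine ⟨c, ?_⟩
  ext
  simp only [Units.coe_map, RingHom.toMonoidHom_eq_coe, MonoidHom.coe_coe, Units.val_mul]
  rw [← Algebra.commutes (↑c : ℂ) (↑g : Matrix (Fin 3) (Fin 3) ℂ), mul_assoc,
    ← Units.val_mul, mul_inv_cancel, Units.val_one, mul_one]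

/-- `PGL(3, ℂ)`: the quotient of `GL(3, ℂ)` by the nonzero scalar matrices. -/
abbrev PGL3 := GL (Fin 3) ℂ ⧸ scalarSub

def lambda20 : Matrix (Fin 3) (Fin 3) ℂ :=
  Matrix.diagonal ![1, 1, Complex.exp (2 * Real.pi * Complex.I / 20)]

/-- `⟨σ, τ, λ₂₀⟩`. -/
def Gt20 : Subgroup (GL (Fin 3) ℂ) := gen3 {sigma, tau, lambda20}


/-!
The Weil representation of `SL₂(𝔽₅)` on the odd functions on `𝔽₅` is a faithful representation
`ρ : SL₂(𝔽₅) → SL₂(ℂ)`; it is constructed from the Bruhat presentation of `SL₂(𝔽₅)`. Since `GL₂`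
embeds into `PGL₃` as a diagonal block, and `λ₂₀` is projectively the block scalar `ζ₂₀⁻¹`, the
image of `⟨σ, τ, λ₂₀⟩` is isomorphic to the subgroup of `GL₂(ℂ)` generated by `σ`, `τ` and the
scalar `ζ₂₀`. Here `σ = ρ(w)` for the Weyl element `w` and `τ = ζ₅³ ρ(u)` for a unipotent `u`, so
this subgroup is `ρ(SL₂(𝔽₅)) · μ₂₀`. As `w² = -1`, the matrix `i ρ(w)` is an involution of
determinant `-1`, which splits off the semidirect factor `ℤ/2`; the remaining scalars `μ₅` meet the
rest trivially because `det² = 1` there, and give the direct factor `ℤ/5`.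
-/
open scoped MatrixGroups

/-- Elements `u x`, `h a`, `w` of a monoid subject to the relations between the unipotent, diagonal
and Weyl elements of `SL₂(F)` that suffice to multiply in Bruhat normal form. By
`BruhatSystem.lift` such a system determines a homomorphism out of `SL₂(F)`. -/
structure BruhatSystem (F G : Type*) [Field F] [Monoid G] where
  u : AddChar F G
  h : Fˣ →* G
  w : G
  h_mul_u (a : Fˣ) (x : F) : h a * u x = u (a ^ 2 * x) * h a
  w_mul_h (a : Fˣ) : w * h a = h a⁻¹ * w
  w_mul_w : w * w = h (-1)
  w_mul_u_mul_w (t : Fˣ) : w * u t * w = u (-t⁻¹) * w * h t * u (-t⁻¹)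

namespace BruhatSystem

variable {F G : Type*} [Field F]

section Monoid

variable [Monoid G] (D : BruhatSystem F G)

/-- The normal form `h a * u b` of the elements of the Borel subgroup. -/
def borel (a : Fˣ) (b : F) : G := D.h a * D.u b

/-- The normal form `u x * w * h c * u y` of the elements of the big Bruhat cell. In the standard
system `c` is the lower left entry. -/
def bigCell (x : F) (c : Fˣ) (y : F) : G := D.u x * D.w * D.h c * D.u y

lemma borel_one_zero : D.borel 1 0 = 1 := by simp [borel]

lemma u_mul_h (x : F) (a : Fˣ) : D.u x * D.h a = D.h a * D.u ((a⁻¹ : Fˣ) ^ 2 * x) := by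
  rw [h_mul_u, ← mul_assoc, ← mul_pow, Units.mul_inv, one_pow, one_mul]

lemma h_mul_w (a : Fˣ) : D.h a * D.w = D.w * D.h a⁻¹ := by rw [w_mul_h, inv_inv]

lemma borel_mul_u (a : Fˣ) (b y : F) : D.borel a b * D.u y = D.borel a (b + y) := by
  rw [borel, borel, mul_assoc, AddChar.map_add_eq_mul]

lemma bigCell_mul_u (x : F) (c : Fˣ) (y z : F) :
    D.bigCell x c y * D.u z = D.bigCell x c (y + z) := by
  rw [bigCell, bigCell, mul_assoc, AddChar.map_add_eq_mul]

lemma borel_mul_h (a : Fˣ) (b : F) (c : Fˣ) :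
    D.borel a b * D.h c = D.borel (a * c) ((c⁻¹ : Fˣ) ^ 2 * b) := by
  rw [borel, borel, mul_assoc, u_mul_h, ← mul_assoc, D.h.map_mul]

lemma bigCell_mul_h (x : F) (c : Fˣ) (y : F) (a : Fˣ) :
    D.bigCell x c y * D.h a = D.bigCell x (c * a) ((a⁻¹ : Fˣ) ^ 2 * y) := by
  rw [bigCell, bigCell, mul_assoc, u_mul_h, ← mul_assoc, mul_assoc _ (D.h c), D.h.map_mul]

lemma borel_mul_w (a : Fˣ) (b : F) : D.borel a b * D.w = D.bigCell (a ^ 2 * b) a⁻¹ 0 := by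
  rw [borel, bigCell, h_mul_u, AddChar.map_zero_eq_one, mul_one, mul_assoc, h_mul_w, mul_assoc]

lemma bigCell_zero_mul_w (x : F) (c : Fˣ) :
    D.bigCell x c 0 * D.w = D.borel (-c⁻¹) (c ^ 2 * x) := by
  calc D.bigCell x c 0 * D.w = D.u x * (D.w * (D.h c * D.w)) := by
        simp only [bigCell, AddChar.map_zero_eq_one, mul_one, mul_assoc]
    _ = D.u x * D.h (-c⁻¹) := by
        rw [h_mul_w, ← mul_assoc D.w, w_mul_w, ← map_mul, neg_one_mul]
    _ = D.borel (-c⁻¹) (c ^ 2 * x) := by simp [u_mul_h, borel, inv_neg]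

lemma bigCell_unit_mul_w (x : F) (c y : Fˣ) :
    D.bigCell x c y * D.w =
      D.bigCell (x - ((c ^ 2 * y)⁻¹ : Fˣ)) (c * y) (-(y⁻¹ : Fˣ)) := by
  set t : Fˣ := c ^ 2 * y with ht
  have hcw : D.h c * D.u y * D.w = D.u t * D.w * D.h c⁻¹ := by
    rw [h_mul_u, mul_assoc, h_mul_w, ← mul_assoc, ht, Units.val_mul, Units.val_pow_eq_pow_val]
  have htc : t * c⁻¹ = c * y := by rw [ht, mul_right_comm, sq, mul_inv_cancel_right]
  have hut : D.u (-(t⁻¹ : Fˣ)) * D.h c⁻¹ = D.h c⁻¹ * D.u (-(y⁻¹ : Fˣ)) := by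
    rw [u_mul_h, inv_inv, mul_neg, ← Units.val_pow_eq_pow_val, ← Units.val_mul, ht]
    simp
  calc D.bigCell x c y * D.w = D.u x * D.w * (D.h c * D.u y * D.w) := by
        simp only [bigCell, mul_assoc]
    _ = D.u x * (D.w * D.u t * D.w) * D.h c⁻¹ := by simp only [hcw, mul_assoc]
    _ = (D.u x * D.u (-(t⁻¹ : Fˣ))) * D.w * D.h t * (D.u (-(t⁻¹ : Fˣ)) * D.h c⁻¹) := by
        rw [w_mul_u_mul_w]; simp only [mul_assoc]
    _ = D.u (x - (t⁻¹ : Fˣ)) * D.w * D.h (t * c⁻¹) * D.u (-(y⁻¹ : Fˣ)) := by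
        simp only [hut, ← AddChar.map_add_eq_mul, sub_eq_add_neg, map_mul, mul_assoc]
    _ = _ := by rw [htc, bigCell]

end Monoid

section Standard

open SpecialLinearGroup

/-- The one-parameter subgroup of upper triangular unipotent matrices in `SL₂(F)`. -/
def upperUnipotent : AddChar F SL(2, F) where
  toFun := transvection zero_ne_one
  map_zero_eq_one' := transvection_coeff_zero zero_ne_one
  map_add_eq_mul' := transvection_add zero_ne_one

@[simp] lemma coe_upperUnipotent (x : F) :
    (upperUnipotent x : Matrix (Fin 2) (Fin 2) F) = !![1, x; 0, 1] := by
  rw [show upperUnipotent x = transvection zero_ne_one x from rfl, transvection_coe]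
  ext i j; fin_cases i <;> fin_cases j <;> simp

/-- The diagonal torus `a ↦ diag(a, a⁻¹)` of `SL₂(F)`. -/
def diagonalTorus : Fˣ →* SL(2, F) where
  toFun a := diag2 (a : F) a.ne_zero
  map_one' := coeMonoidHom_injective <| by simp [diag2_coe', one_fin_two]
  map_mul' a b := coeMonoidHom_injective <| by simp [diag2_coe', mul_comm]

@[simp] lemma coe_diagonalTorus (a : Fˣ) :
    (diagonalTorus a : Matrix (Fin 2) (Fin 2) F) = !![(a : F), 0; 0, (a : F)⁻¹] :=
  diag2_coe' a.ne_zero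

/-- The standard representative in `SL₂(F)` of the nontrivial Weyl group element. -/
def weylElement : SL(2, F) := ⟨!![0, -1; 1, 0], by simp⟩

@[simp] lemma coe_weylElement :
    ((weylElement : SL(2, F)) : Matrix (Fin 2) (Fin 2) F) = !![0, -1; 1, 0] := rfl

lemma weylElement_sq : (weylElement : SL(2, F)) ^ 2 = -1 :=
  coeMonoidHom_injective <| by simp [sq, one_fin_two]

variable (F) in
/-- The Bruhat system of `SL₂(F)` itself. -/
@[simps]
def std : BruhatSystem F SL(2, F) where
  u := upperUnipotent
  h := diagonalTorus
  w := weylElement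
  h_mul_u a x := coeMonoidHom_injective <| by simp [field]
  w_mul_h a := coeMonoidHom_injective <| by simp [-map_inv]
  w_mul_w := coeMonoidHom_injective <| by simp
  w_mul_u_mul_w t := coeMonoidHom_injective <| by simp

lemma coe_std_borel (a : Fˣ) (b : F) :
    ((std F).borel a b : Matrix (Fin 2) (Fin 2) F) = !![(a : F), a * b; 0, (a : F)⁻¹] := by
  simp [borel]

lemma coe_std_bigCell (x : F) (c : Fˣ) (y : F) :
    ((std F).bigCell x c y : Matrix (Fin 2) (Fin 2) F) =
      !![x * c, x * c * y - (c : F)⁻¹; (c : F), c * y] := by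
  simp [bigCell, sub_eq_add_neg]

lemma exists_eq_std_borel_or_bigCell (g : SL(2, F)) :
    (∃ a b, g = (std F).borel a b) ∨ ∃ x c y, g = (std F).bigCell x c y := by
  obtain ⟨a, b, c, d, hdet, rfl⟩ : ∃ (a b c d : F) (h : a * d - b * c = 1),
      g = ⟨!![a, b; c, d], by rwa [det_fin_two_of]⟩ := by
    induction g using SpecialLinearGroup.fin_two_induction with
    | h a b c d h => exact ⟨a, b, c, d, h, rfl⟩
  by_cases hc : c = 0
  · subst hc
    have had : a * d = 1 := by simpa using hdet
    have ha : a ≠ 0 := left_ne_zero_of_mul_eq_one had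
    refine .inl ⟨.mk0 a ha, b / a, Subtype.ext ?_⟩
    rw [coe_std_borel]
    simp [mul_div_cancel₀ _ ha, eq_inv_of_mul_eq_one_right had]
  · refine .inr ⟨a / c, .mk0 c hc, d / c, Subtype.ext ?_⟩
    rw [coe_std_bigCell]
    have hb : b = a * d / c - c⁻¹ := by field_simp; linear_combination -hdet
    simp [hc, hb, mul_div_cancel₀, mul_div_assoc, mul_comm]

end Standard

section Lift

lemma apply_zero_zero_ne_zero {g : SL(2, F)} (hc : g 1 0 = 0) : g 0 0 ≠ 0 := fun ha =>
  g.det_ne_zero (by rw [det_fin_two, ha, hc, zero_mul, mul_zero, sub_zero])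

variable [Monoid G] (D : BruhatSystem F G)

open scoped Classical in
/-- The map underlying `BruhatSystem.lift`: read off the Bruhat normal form of a matrix from its
entries, and evaluate it in `D`. -/
def liftFun (g : SL(2, F)) : G :=
  if hc : g 1 0 = 0 then D.borel (.mk0 (g 0 0) (apply_zero_zero_ne_zero hc)) (g 0 1 / g 0 0)
  else D.bigCell (g 0 0 / g 1 0) (.mk0 (g 1 0) hc) (g 1 1 / g 1 0)

lemma liftFun_borel (a : Fˣ) (b : F) : D.liftFun ((std F).borel a b) = D.borel a b := by
  simp [liftFun, coe_std_borel]

lemma liftFun_bigCell (x : F) (c : Fˣ) (y : F) :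
    D.liftFun ((std F).bigCell x c y) = D.bigCell x c y := by
  simp [liftFun, coe_std_bigCell]

lemma liftFun_mul_u (g : SL(2, F)) (x : F) :
    D.liftFun (g * (std F).u x) = D.liftFun g * D.u x := by
  obtain ⟨a, b, rfl⟩ | ⟨x, c, y, rfl⟩ := exists_eq_std_borel_or_bigCell g
  · simp only [borel_mul_u, liftFun_borel]
  · simp only [bigCell_mul_u, liftFun_bigCell]

lemma liftFun_mul_h (g : SL(2, F)) (a : Fˣ) :
    D.liftFun (g * (std F).h a) = D.liftFun g * D.h a := by
  obtain ⟨a, b, rfl⟩ | ⟨x, c, y, rfl⟩ := exists_eq_std_borel_or_bigCell g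
  · simp only [borel_mul_h, liftFun_borel]
  · simp only [bigCell_mul_h, liftFun_bigCell]

lemma liftFun_mul_w (g : SL(2, F)) :
    D.liftFun (g * (std F).w) = D.liftFun g * D.w := by
  obtain ⟨a, b, rfl⟩ | ⟨x, c, y, rfl⟩ := exists_eq_std_borel_or_bigCell g
  · simp only [borel_mul_w, liftFun_borel, liftFun_bigCell]
  · obtain rfl | hy := eq_or_ne y 0
    · simp only [bigCell_zero_mul_w, liftFun_borel, liftFun_bigCell]
    · lift y to Fˣ using hy.isUnit
      simp only [bigCell_unit_mul_w, liftFun_bigCell]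

/-- The homomorphism out of `SL₂(F)` determined by a Bruhat system. -/
def lift : SL(2, F) →* G where
  toFun := D.liftFun
  map_one' := by rw [← borel_one_zero (std F), liftFun_borel, borel_one_zero]
  map_mul' g k := by
    obtain ⟨a, b, rfl⟩ | ⟨x, c, y, rfl⟩ := exists_eq_std_borel_or_bigCell k
    · rw [liftFun_borel, borel, borel, ← mul_assoc, ← mul_assoc, liftFun_mul_u, liftFun_mul_h]
    · rw [liftFun_bigCell, bigCell, bigCell]
      simp only [← mul_assoc, liftFun_mul_u, liftFun_mul_h, liftFun_mul_w]

lemma lift_borel (a : Fˣ) (b : F) : D.lift ((std F).borel a b) = D.borel a b :=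
  D.liftFun_borel a b

lemma lift_bigCell (x : F) (c : Fˣ) (y : F) :
    D.lift ((std F).bigCell x c y) = D.bigCell x c y :=
  D.liftFun_bigCell x c y

lemma lift_upperUnipotent (x : F) : D.lift (upperUnipotent x) = D.u x := by
  simpa [borel] using D.lift_borel 1 x

lemma lift_weylElement : D.lift weylElement = D.w := by
  simpa [bigCell] using D.lift_bigCell 0 1 0

lemma lift_injective (hborel : ∀ a b, D.borel a b = 1 → a = 1 ∧ b = 0)
    (hbig : ∀ x c y, D.bigCell x c y ≠ 1) : Function.Injective D.lift := by
  refine (injective_iff_map_eq_one D.lift).2 fun g hg => ?_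
  obtain ⟨a, b, rfl⟩ | ⟨x, c, y, rfl⟩ := exists_eq_std_borel_or_bigCell g
  · rw [lift_borel] at hg
    obtain ⟨rfl, rfl⟩ := hborel a b hg
    exact borel_one_zero _
  · exact absurd (D.lift_bigCell x c y ▸ hg) (hbig x c y)

end Lift

section Generation

lemma h_eq [Group G] (D : BruhatSystem F G) (t : Fˣ) :
    D.h t = D.w⁻¹ * (D.u (-(t⁻¹ : Fˣ)))⁻¹ * (D.w * D.u t * D.w) * (D.u (-(t⁻¹ : Fˣ)))⁻¹ := by
  rw [w_mul_u_mul_w]; group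

lemma eq_top_of_upperUnipotent_mem {K : Subgroup SL(2, F)} (hu : ∀ x, upperUnipotent x ∈ K)
    (hw : weylElement ∈ K) : K = ⊤ := by
  have hh (a : Fˣ) : (std F).h a ∈ K := by
    rw [h_eq]
    exact mul_mem (mul_mem (mul_mem (inv_mem hw) (inv_mem (hu _)))
      (mul_mem (mul_mem hw (hu _)) hw)) (inv_mem (hu _))
  refine eq_top_iff.2 fun g _ => ?_
  obtain ⟨a, b, rfl⟩ | ⟨x, c, y, rfl⟩ := exists_eq_std_borel_or_bigCell g
  · exact mul_mem (hh a) (hu b)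
  · exact mul_mem (mul_mem (mul_mem (hu x) hw) (hh c)) (hu y)

lemma closure_upperUnipotent_one_weylElement (p : ℕ) [Fact p.Prime] :
    Subgroup.closure {upperUnipotent 1, weylElement} = (⊤ : Subgroup SL(2, ZMod p)) := by
  refine eq_top_of_upperUnipotent_mem (fun x => ?_) (Subgroup.subset_closure (.inr rfl))
  have hx : upperUnipotent x = upperUnipotent 1 ^ x.val := by
    rw [← AddChar.map_nsmul_eq_pow, nsmul_one, ZMod.natCast_zmod_val]
  rw [hx]
  exact pow_mem (Subgroup.subset_closure (.inl rfl)) _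

end Generation

end BruhatSystem

section Cyclic

variable {G : Type*} [Group G] (n : ℕ) {g : G}

/-- The homomorphism from the (multiplicatively written) cyclic group of order `n` sending its
generator to an element `g` with `g ^ n = 1`. -/
def zmodPowersHom (g : G) (hg : g ^ n = 1) : Multiplicative (ZMod n) →* G :=
  (ZMod.lift n ⟨zmultiplesHom (Additive G) (.ofMul g),
    by simp [← ofMul_pow, hg]⟩).toMultiplicativeLeft

lemma zmodPowersHom_ofAdd_intCast (hg : g ^ n = 1) (k : ℤ) :
    zmodPowersHom n g hg (.ofAdd (k : ZMod n)) = g ^ k := by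
  simp [zmodPowersHom]

lemma exists_ofAdd_intCast_eq (x : Multiplicative (ZMod n)) :
    ∃ k : ℤ, Multiplicative.ofAdd (k : ZMod n) = x :=
  ZMod.intCast_surjective x.toAdd

lemma zmodPowersHom_injective (hg : orderOf g = n) :
    Function.Injective (zmodPowersHom n g (hg ▸ pow_orderOf_eq_one g)) := by
  refine (injective_iff_map_eq_one _).2 fun x hx => ?_
  obtain ⟨k, rfl⟩ := exists_ofAdd_intCast_eq n x
  rw [zmodPowersHom_ofAdd_intCast, ← orderOf_dvd_iff_zpow_eq_one, hg] at hx
  rw [(ZMod.intCast_zmod_eq_zero_iff_dvd k n).2 hx, ofAdd_zero]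

lemma range_zmodPowersHom (hg : g ^ n = 1) :
    (zmodPowersHom n g hg).range = Subgroup.zpowers g := by
  ext y
  constructor
  · rintro ⟨x, rfl⟩
    obtain ⟨k, rfl⟩ := exists_ofAdd_intCast_eq n x
    exact ⟨k, (zmodPowersHom_ofAdd_intCast n hg k).symm⟩
  · rintro ⟨k, rfl⟩
    exact ⟨_, zmodPowersHom_ofAdd_intCast n hg k⟩

lemma disjoint_zpowers_of_orderOf_prime {H : Subgroup G} (hp : (orderOf g).Prime) (hg : g ∉ H) :
    Disjoint H (Subgroup.zpowers g) := by
  have : Fact (Nat.card (Subgroup.zpowers g)).Prime := ⟨by rwa [Nat.card_zpowers]⟩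
  obtain h | h := (H.subgroupOf (Subgroup.zpowers g)).eq_bot_or_eq_top_of_prime_card
  · rwa [Subgroup.subgroupOf_eq_bot] at h
  · exact absurd (Subgroup.subgroupOf_eq_top.1 h (Subgroup.mem_zpowers g)) hg

lemma closure_mul_pow_inv (u w z : G) :
    Subgroup.closure {w, u * z ^ n, z⁻¹} = Subgroup.closure {u, w} ⊔ Subgroup.zpowers z := by
  rw [Subgroup.zpowers_eq_closure, ← Subgroup.closure_union]
  refine le_antisymm ((Subgroup.closure_le _).2 ?_) ((Subgroup.closure_le _).2 ?_)
  · set K := Subgroup.closure ({u, w} ∪ {z})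
    have hu : u ∈ K := Subgroup.subset_closure (by simp)
    have hw : w ∈ K := Subgroup.subset_closure (by simp)
    have hz : z ∈ K := Subgroup.subset_closure (by simp)
    rintro _ (rfl | rfl | rfl)
    exacts [hw, mul_mem hu (pow_mem hz _), inv_mem hz]
  · set K := Subgroup.closure {w, u * z ^ n, z⁻¹}
    have hw : w ∈ K := Subgroup.subset_closure (by simp)
    have huz : u * z ^ n ∈ K := Subgroup.subset_closure (by simp)
    have hz : z ∈ K := inv_mem_iff.1 (Subgroup.subset_closure (by simp))
    have hu : u ∈ K := (K.mul_mem_cancel_right (pow_mem hz _)).1 huz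
    rintro _ ((rfl | rfl) | rfl)
    exacts [hu, hw, hz]

end Cyclic

section SemidirectLift

variable {N K G : Type*} [Group N] [Group K] [Group G] {φ : K →* MulAut N}
  {f₁ : N →* G} {f₂ : K →* G}
  (h : ∀ k, f₁.comp (φ k).toMonoidHom = (MulAut.conj (f₂ k)).toMonoidHom.comp f₁)

include h in
lemma semidirectProduct_lift_injective (hf₁ : Function.Injective f₁) (hf₂ : Function.Injective f₂)
    (hd : Disjoint f₁.range f₂.range) : Function.Injective (SemidirectProduct.lift f₁ f₂ h) := by
  refine (injective_iff_map_eq_one _).2 fun x hx => ?_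
  have hx : f₁ x.left * f₂ x.right = 1 := hx
  have h₁ : f₁ x.left = 1 := Subgroup.disjoint_def.1 hd ⟨_, rfl⟩
    (eq_inv_of_mul_eq_one_left hx ▸ inv_mem ⟨_, rfl⟩)
  have h₂ : f₂ x.right = 1 := by rwa [h₁, one_mul] at hx
  exact SemidirectProduct.ext ((map_eq_one_iff f₁ hf₁).1 h₁) ((map_eq_one_iff f₂ hf₂).1 h₂)

lemma range_semidirectProduct_lift :
    (SemidirectProduct.lift f₁ f₂ h).range = f₁.range ⊔ f₂.range := by
  refine le_antisymm ?_ (sup_le ?_ ?_)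
  · rintro _ ⟨x, rfl⟩
    exact mul_mem (Subgroup.mem_sup_left ⟨_, rfl⟩) (Subgroup.mem_sup_right ⟨_, rfl⟩)
  · rintro _ ⟨y, rfl⟩
    exact ⟨.inl y, SemidirectProduct.lift_inl f₁ f₂ h y⟩
  · rintro _ ⟨k, rfl⟩
    exact ⟨.inr k, SemidirectProduct.lift_inr f₁ f₂ h k⟩

end SemidirectLift

section CyclicExtension

variable {N G : Type*} [Group N] [Group G] {n : ℕ} {α : MulAut N} {f : N →* G} {g : G}

lemma map_zpow_apply_eq_conj_zpow (hfg : ∀ x, f (α x) = MulAut.conj g (f x)) (k : ℤ) (x : N) :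
    f ((α ^ k) x) = MulAut.conj (g ^ k) (f x) := by
  have hinv (x : N) : f (α⁻¹ x) = MulAut.conj g⁻¹ (f x) := by
    rw [map_inv, ← MulAut.inv_apply_self _ (MulAut.conj g) (f _), ← hfg, MulAut.apply_inv_self]
  induction k generalizing x with
  | zero => simp
  | succ k ih => rw [_root_.zpow_add_one, MulAut.mul_apply, ih, hfg, _root_.zpow_add_one, map_mul,
      MulAut.mul_apply]
  | pred k ih => rw [_root_.zpow_sub_one, MulAut.mul_apply, ih, hinv, _root_.zpow_sub_one, map_mul,
      MulAut.mul_apply]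

/-- The extension of `f : N →* G` to the semidirect product of `N` with the cyclic group of order
`n` generated by `α`, sending the generator to an element `g` that induces `α` by conjugation. -/
def cyclicExtensionHom (hα : α ^ n = 1) (hg : g ^ n = 1)
    (hfg : ∀ x, f (α x) = MulAut.conj g (f x)) :
    N ⋊[zmodPowersHom n α hα] Multiplicative (ZMod n) →* G :=
  SemidirectProduct.lift f (zmodPowersHom n g hg) fun x => by
    obtain ⟨k, rfl⟩ := exists_ofAdd_intCast_eq n x
    ext y
    rw [zmodPowersHom_ofAdd_intCast, zmodPowersHom_ofAdd_intCast]
    exact map_zpow_apply_eq_conj_zpow hfg k y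

lemma cyclicExtensionHom_injective (hα : α ^ n = 1) (hg : orderOf g = n)
    (hfg : ∀ x, f (α x) = MulAut.conj g (f x)) (hf : Function.Injective f)
    (hd : Disjoint f.range (Subgroup.zpowers g)) :
    Function.Injective (cyclicExtensionHom hα (hg ▸ pow_orderOf_eq_one g) hfg) :=
  semidirectProduct_lift_injective _ hf (zmodPowersHom_injective n hg)
    (by rwa [range_zmodPowersHom])

lemma range_cyclicExtensionHom (hα : α ^ n = 1) (hg : g ^ n = 1)
    (hfg : ∀ x, f (α x) = MulAut.conj g (f x)) :
    (cyclicExtensionHom hα hg hfg).range = f.range ⊔ Subgroup.zpowers g := by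
  rw [cyclicExtensionHom, range_semidirectProduct_lift, range_zmodPowersHom]

end CyclicExtension

lemma isPrimitiveRoot_zeta5 : IsPrimitiveRoot zeta5 5 := by
  simpa [zeta5] using Complex.isPrimitiveRoot_exp 5 (by norm_num)

lemma zeta5_pow_five : zeta5 ^ 5 = 1 := isPrimitiveRoot_zeta5.pow_eq_one

lemma zeta5_cyclotomic : 1 + zeta5 + zeta5 ^ 2 + zeta5 ^ 3 + zeta5 ^ 4 = 0 := by
  simpa [Finset.sum_range_succ] using isPrimitiveRoot_zeta5.geom_sum_eq_zero (by norm_num)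

lemma sqrt5_mul_self : sqrt5 * sqrt5 = 5 := by
  rw [sqrt5]
  linear_combination (zeta5 ^ 4 - 3 * zeta5 ^ 3 + zeta5 ^ 2 + 5 * zeta5 - 5) * zeta5_cyclotomic

lemma sqrt5_ne_zero : sqrt5 ≠ 0 := fun h => by simpa [h] using sqrt5_mul_self

section SLTwoFive

lemma fact_prime_five : Fact (Nat.Prime 5) := ⟨Nat.prime_five⟩

attribute [local instance] fact_prime_five

namespace OddWeil
open SpecialLinearGroup BruhatSystem

/-- `ζ₅` as a unit. -/
def zeta5Unit : ℂˣ := .mk0 zeta5 (isPrimitiveRoot_zeta5.ne_zero (by norm_num))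

lemma zeta5Unit_pow_five : zeta5Unit ^ 5 = 1 := Units.ext zeta5_pow_five

/-- The action `f ↦ ψ(b x² / 2) f` of the unipotents in the Weil representation on odd functions on
`𝔽₅`, where `ψ b = ζ₅ ^ b`. The basis consists of the functions `δ_y - δ_{-y}` for `y = 1, 3`; note
that `1 / 2 = 3` in `𝔽₅`. -/
def unipotent : AddChar (ZMod 5) SL(2, ℂ) :=
  diagonalTorus.compAddChar ((AddChar.zmodChar 5 zeta5Unit_pow_five).mulShift 3)

lemma coe_unipotent (b : ZMod 5) : (unipotent b : Matrix (Fin 2) (Fin 2) ℂ) =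
    !![zeta5 ^ (3 * b).val, 0; 0, zeta5 ^ (2 * b).val] := by
  have hsum : (3 * b).val + (2 * b).val ∈ ({0, 5} : Set ℕ) := by decide +revert
  have hinv : (zeta5 ^ (3 * b).val)⁻¹ = zeta5 ^ (2 * b).val := by
    refine inv_eq_of_mul_eq_one_right ?_
    rw [← pow_add]
    obtain h | h := hsum
    · rw [h, pow_zero]
    · rw [h, zeta5_pow_five]
  rw [unipotent, MonoidHom.compAddChar_apply, Function.comp_apply, coe_diagonalTorus,
    AddChar.mulShift_apply, AddChar.zmodChar_apply, Units.val_pow_eq_pow_val, ← hinv]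
  rfl

/-- The odd function `δ_y - δ_{-y}` on `𝔽₅`. -/
def oddDelta (y x : ZMod 5) : ℤ := (if x = y then 1 else 0) - if x = -y then 1 else 0

/-- The integral matrix of `f ↦ χ(a) f(a ·)` on odd functions on `𝔽₅`, with `χ` the quadratic
character, in the basis `δ_y - δ_{-y}` for `y = 1, 3`. -/
def rotation (a : (ZMod 5)ˣ) : SL(2, ℤ) :=
  ⟨!![oddDelta 1 a, oddDelta 2 a; -oddDelta 2 a, oddDelta 1 a], by decide +revert⟩

lemma coe_rotation (a : (ZMod 5)ˣ) : (rotation a : Matrix (Fin 2) (Fin 2) ℤ) =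
    !![oddDelta 1 a, oddDelta 2 a; -oddDelta 2 a, oddDelta 1 a] := rfl

/-- The action of the diagonal torus in the Weil representation on odd functions on `𝔽₅`. -/
def torus : (ZMod 5)ˣ →* SL(2, ℂ) where
  toFun a := rotation a
  map_one' := by
    rw [show rotation 1 = 1 by decide, map_one]
  map_mul' a b := by
    rw [show rotation (a * b) = rotation a * rotation b by decide +revert, map_mul]

lemma coe_torus (a : (ZMod 5)ˣ) : (torus a : Matrix (Fin 2) (Fin 2) ℂ) =
    !![(oddDelta 1 a : ℂ), oddDelta 2 a; -oddDelta 2 a, oddDelta 1 a] := by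
  rw [show torus a = SpecialLinearGroup.map (Int.castRingHom ℂ) (rotation a) from rfl]
  ext i j; fin_cases i <;> fin_cases j <;> simp [map_apply_coe, coe_rotation]

/-- The unnormalised Fourier transform on odd functions on `𝔽₅`, with entries `ζ₅ ^ xy - ζ₅ ^ (-xy)`
for `x, y = 1, 3`. -/
def gauss : Matrix (Fin 2) (Fin 2) ℂ :=
  !![zeta5 - zeta5 ^ 4, zeta5 ^ 3 - zeta5 ^ 2; zeta5 ^ 3 - zeta5 ^ 2, -(zeta5 - zeta5 ^ 4)]

lemma gauss_mul_self : gauss * gauss = (-5 : ℂ) • 1 := by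
  have hcyc := zeta5_cyclotomic
  rw [gauss, one_fin_two]
  ext i j
  fin_cases i <;> fin_cases j <;> simp <;> grind

lemma det_gauss : gauss.det = 5 := by
  have hcyc := zeta5_cyclotomic
  rw [gauss, det_fin_two_of]
  grind

/-- The unitary Fourier transform on odd functions on `𝔽₅`, through which the Weyl element acts. -/
def fourier : SL(2, ℂ) :=
  ⟨sqrt5⁻¹ • gauss, by
    rw [det_smul, det_gauss, ← sqrt5_mul_self, Fintype.card_fin, inv_pow, ← sq,
      inv_mul_cancel₀ (pow_ne_zero 2 sqrt5_ne_zero)]⟩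

lemma coe_fourier : (fourier : Matrix (Fin 2) (Fin 2) ℂ) = sqrt5⁻¹ • gauss := rfl

lemma gauss_mul_unipotent_mul_gauss (t : (ZMod 5)ˣ) :
    gauss * (unipotent t).1 * gauss =
      sqrt5 • ((unipotent (-(t⁻¹ : (ZMod 5)ˣ))).1 * gauss * (torus t).1 *
        (unipotent (-(t⁻¹ : (ZMod 5)ˣ))).1) := by
  have key : ∀ t : (ZMod 5)ˣ, let s : ZMod 5 := -(t⁻¹ : (ZMod 5)ˣ)
      let exps (x : ZMod 5) := ((3 * x).val, (2 * x).val)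
      let rot := (oddDelta 1 t, oddDelta 2 t)
      (exps t = (3, 2) ∧ exps s = (2, 3) ∧ rot = (1, 0)) ∨
      (exps t = (1, 4) ∧ exps s = (1, 4) ∧ rot = (0, 1)) ∨
      (exps t = (4, 1) ∧ exps s = (4, 1) ∧ rot = (0, -1)) ∨
      (exps t = (2, 3) ∧ exps s = (3, 2) ∧ rot = (-1, 0)) := by
    decide
  simp only [Prod.mk.injEq] at key
  have hcyc := zeta5_cyclotomic
  simp only [coe_unipotent, coe_torus, gauss, sqrt5]
  rcases key t with ⟨⟨h₁, h₂⟩, ⟨h₃, h₄⟩, h₅, h₆⟩ | ⟨⟨h₁, h₂⟩, ⟨h₃, h₄⟩, h₅, h₆⟩ |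
    ⟨⟨h₁, h₂⟩, ⟨h₃, h₄⟩, h₅, h₆⟩ | ⟨⟨h₁, h₂⟩, ⟨h₃, h₄⟩, h₅, h₆⟩ <;>
  rw [h₁, h₂, h₃, h₄, h₅, h₆] <;>
  ext i j <;> fin_cases i <;> fin_cases j <;> simp <;> grind

lemma torus_mul_unipotent (a : (ZMod 5)ˣ) (x : ZMod 5) :
    torus a * unipotent x = unipotent (a ^ 2 * x) * torus a := by
  refine coeMonoidHom_injective ?_
  have key : (oddDelta 2 a = 0 ∧ (a : ZMod 5) ^ 2 = 1) ∨
      (oddDelta 1 a = 0 ∧ (a : ZMod 5) ^ 2 = -1) := by decide +revert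
  rcases key with ⟨ha, ha'⟩ | ⟨ha, ha'⟩
  · simp [coe_torus, coe_unipotent, ha, ha', mul_comm]
  · have h3 : -(3 * x) = 2 * x := by decide +revert
    have h2 : -(2 * x) = 3 * x := by decide +revert
    simp [coe_torus, coe_unipotent, ha, ha', h2, h3, mul_comm (oddDelta 2 a : ℂ)]

lemma fourier_mul_torus (a : (ZMod 5)ˣ) : fourier * torus a = torus a⁻¹ * fourier := by
  refine coeMonoidHom_injective ?_
  have h1 : oddDelta 1 (a⁻¹ : (ZMod 5)ˣ) = oddDelta 1 a := by decide +revert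
  have h2 : oddDelta 2 (a⁻¹ : (ZMod 5)ˣ) = -oddDelta 2 a := by decide +revert
  rw [map_mul, map_mul, coeMonoidHom_apply, coeMonoidHom_apply, coeMonoidHom_apply,
    coe_torus, coe_torus, coe_fourier, h1, h2, Matrix.smul_mul, Matrix.mul_smul, gauss]
  congr 1
  ext i j
  fin_cases i <;> fin_cases j <;> simp <;> ring

lemma fourier_mul_self : fourier * fourier = torus (-1) := by
  refine coeMonoidHom_injective ?_
  have h1 : oddDelta 1 (-1) = -1 := by decide
  have h2 : oddDelta 2 (-1) = 0 := by decide
  have : sqrt5⁻¹ * (sqrt5⁻¹ * 5) = 1 := by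
    rw [← sqrt5_mul_self]; field_simp [sqrt5_ne_zero]
  simp [coe_fourier, coe_torus, gauss_mul_self, h1, h2, this, one_fin_two]

lemma fourier_mul_unipotent_mul_fourier (t : (ZMod 5)ˣ) :
    fourier * unipotent t * fourier =
      unipotent (-(t⁻¹ : (ZMod 5)ˣ)) * fourier * torus t * unipotent (-(t⁻¹ : (ZMod 5)ˣ)) := by
  refine coeMonoidHom_injective ?_
  simp only [map_mul, coeMonoidHom_apply, coe_fourier, Matrix.smul_mul, Matrix.mul_smul,
    gauss_mul_unipotent_mul_gauss t]
  rw [inv_smul_smul₀ sqrt5_ne_zero]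

/-- The Weil representation of `SL₂(𝔽₅)` on odd functions on `𝔽₅`, as a Bruhat system. -/
def bruhatSystem : BruhatSystem (ZMod 5) SL(2, ℂ) where
  u := unipotent
  h := torus
  w := fourier
  h_mul_u := torus_mul_unipotent
  w_mul_h := fourier_mul_torus
  w_mul_w := fourier_mul_self
  w_mul_u_mul_w := fourier_mul_unipotent_mul_fourier

lemma unipotent_zero_zero_pow_five (b : ZMod 5) : unipotent b 0 0 ^ 5 = 1 := by
  rw [coe_unipotent, of_apply, cons_val_zero, cons_val_zero, pow_right_comm, zeta5_pow_five,
    one_pow]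

lemma eq_zero_of_unipotent_eq_one {b : ZMod 5} (hb : unipotent b = 1) : b = 0 := by
  have hpow : zeta5 ^ (3 * b).val = 1 := by
    simpa [coe_unipotent] using congrArg (fun g : SL(2, ℂ) => g 0 0) hb
  have hdvd := (isPrimitiveRoot_zeta5.pow_eq_one_iff_dvd _).1 hpow
  clear hb hpow
  decide +revert

lemma torus_mul_unipotent_eq_one {a : (ZMod 5)ˣ} {b : ZMod 5} (h : torus a * unipotent b = 1) :
    a = 1 ∧ b = 0 := by
  have htorus : torus a = unipotent (-b) := by
    rw [AddChar.map_neg_eq_inv, eq_inv_iff_mul_eq_one, h]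
  have ha : a = 1 := by
    have hpow : (oddDelta 1 a : ℂ) ^ 5 = 1 := by
      simpa [← htorus, coe_torus] using unipotent_zero_zero_pow_five (-b)
    norm_cast at hpow
    clear h htorus
    decide +revert
  rw [ha, map_one, one_mul] at h
  exact ⟨ha, eq_zero_of_unipotent_eq_one h⟩

lemma fourier_mul_torus_zero_one_ne_zero (a : (ZMod 5)ˣ) : (fourier * torus a) 0 1 ≠ 0 := by
  have h : ((oddDelta 1 a = 1 ∨ oddDelta 1 a = -1) ∧ oddDelta 2 a = 0) ∨
      (oddDelta 1 a = 0 ∧ (oddDelta 2 a = 1 ∨ oddDelta 2 a = -1)) := by decide +revert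
  have h₁₄ : zeta5 ≠ zeta5 ^ 4 := fun h => by
    simpa using isPrimitiveRoot_zeta5.pow_inj (i := 1) (j := 4) (by norm_num) (by norm_num)
      (by rwa [pow_one])
  have h₂₃ : zeta5 ^ 3 ≠ zeta5 ^ 2 := fun h => by
    simpa using isPrimitiveRoot_zeta5.pow_inj (by norm_num) (by norm_num) h
  rw [← coeMonoidHom_apply, map_mul, coeMonoidHom_apply, coeMonoidHom_apply, coe_fourier,
    coe_torus, gauss]
  rcases h with ⟨h | h, h'⟩ | ⟨h', h | h⟩ <;>
    simp [h, h', sqrt5_ne_zero, sub_eq_zero, h₁₄, h₂₃]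

lemma bruhatSystem_lift_injective : Function.Injective bruhatSystem.lift := by
  refine bruhatSystem.lift_injective (fun a b => torus_mul_unipotent_eq_one) fun x c y h => ?_
  have h : unipotent x * (fourier * torus c) * unipotent y = 1 := by rw [← mul_assoc]; exact h
  have hdiag : fourier * torus c = unipotent (-x + -y) := by
    rw [AddChar.map_add_eq_mul, AddChar.map_neg_eq_inv, AddChar.map_neg_eq_inv,
      eq_inv_mul_iff_mul_eq, eq_inv_iff_mul_eq_one, h]
  exact fourier_mul_torus_zero_one_ne_zero c (by simp [hdiag, coe_unipotent])

lemma bruhatSystem_lift_upperUnipotent (x : ZMod 5) :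
    bruhatSystem.lift (upperUnipotent x) = unipotent x :=
  bruhatSystem.lift_upperUnipotent x

lemma bruhatSystem_lift_weylElement : bruhatSystem.lift weylElement = fourier :=
  bruhatSystem.lift_weylElement

end OddWeil

section Generated

open BruhatSystem OddWeil

/-- The faithful two-dimensional Weil representation of `SL₂(𝔽₅)` on odd functions on `𝔽₅`. -/
def oddWeil : SL25 →* GL (Fin 2) ℂ := SpecialLinearGroup.toGL.comp bruhatSystem.lift

lemma oddWeil_injective : Function.Injective oddWeil :=
  SpecialLinearGroup.toGL_injective.comp bruhatSystem_lift_injective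

lemma det_oddWeil (g : SL25) : (oddWeil g).det = 1 :=
  Units.ext (bruhatSystem.lift g).2

lemma oddWeil_neg_one : oddWeil (-1) = GeneralLinearGroup.scalar (Fin 2) (-1) := by
  have h : bruhatSystem.lift (-1) = torus (-1) := by
    rw [← weylElement_sq, map_pow, bruhatSystem_lift_weylElement, sq, fourier_mul_self]
  have h1 : oddDelta 1 (-1) = -1 := by decide
  have h2 : oddDelta 2 (-1) = 0 := by decide
  refine Units.ext ?_
  rw [oddWeil, MonoidHom.comp_apply, h, SpecialLinearGroup.coe_GL_coe_matrix, coe_torus]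
  ext i j; fin_cases i <;> fin_cases j <;> simp [h1, h2]

lemma range_oddWeil :
    oddWeil.range = Subgroup.closure {oddWeil (upperUnipotent 1), oddWeil weylElement} := by
  rw [MonoidHom.range_eq_map, ← closure_upperUnipotent_one_weylElement, MonoidHom.map_closure,
    Set.image_pair]

/-- `ζ₂₀` as a unit. -/
def zeta20 : ℂˣ := .mk0 (Complex.exp (2 * Real.pi * Complex.I / 20)) (Complex.exp_ne_zero _)

lemma zeta20_pow_four : zeta20 ^ 4 = zeta5Unit := by
  ext
  simp only [zeta20, zeta5Unit, Units.val_pow_eq_pow_val, Units.val_mk0, zeta5]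
  rw [← Complex.exp_nat_mul]
  congr 1
  push_cast; ring

lemma zeta20_pow_ten : zeta20 ^ 10 = -1 := by
  ext
  simp only [zeta20, Units.val_pow_eq_pow_val, Units.val_mk0, Units.val_neg, Units.val_one]
  rw [← Complex.exp_nat_mul, ← Complex.exp_pi_mul_I]
  congr 1
  push_cast; ring

/-- The matrix `i • ρ(w)`, where `i = ζ₂₀ ^ 5`: the scalar turns `ρ(w)`, which has order four, into
an involution. -/
def weylInvolution : GL (Fin 2) ℂ :=
  GeneralLinearGroup.scalar (Fin 2) (zeta20 ^ 5) * oddWeil weylElement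

lemma weylInvolution_sq : weylInvolution ^ 2 = 1 := by
  rw [weylInvolution, Commute.mul_pow (GeneralLinearGroup.scalar_commute _ _), ← map_pow,
    ← map_pow, weylElement_sq, oddWeil_neg_one, ← pow_mul, zeta20_pow_ten, ← map_mul,
    neg_one_mul, neg_neg, map_one]

lemma det_weylInvolution : weylInvolution.det = -1 := by
  rw [weylInvolution, map_mul, det_oddWeil, GeneralLinearGroup.det_scalar, mul_one,
    Fintype.card_fin, ← pow_mul, zeta20_pow_ten]

lemma weylInvolution_notMem_range_oddWeil : weylInvolution ∉ oddWeil.range := by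
  rintro ⟨g, hg⟩
  have hdet : (-1 : ℂˣ) = 1 := by rw [← det_weylInvolution, ← hg, det_oddWeil]
  exact absurd (congrArg Units.val hdet) (by norm_num)

lemma orderOf_weylInvolution : orderOf weylInvolution = 2 :=
  orderOf_eq_prime weylInvolution_sq fun h => weylInvolution_notMem_range_oddWeil (h ▸ one_mem _)

lemma conj_weylElement_sq : MulAut.conj (weylElement : SL25) ^ 2 = 1 := by
  rw [← map_pow, weylElement_sq]
  ext1 g
  simp

lemma oddWeil_conj_weylElement (g : SL25) :
    oddWeil (MulAut.conj weylElement g) = MulAut.conj weylInvolution (oddWeil g) := by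
  have hconj : MulAut.conj (GeneralLinearGroup.scalar (Fin 2) (zeta20 ^ 5))
      (oddWeil (MulAut.conj weylElement g)) = oddWeil (MulAut.conj weylElement g) := by
    rw [MulAut.conj_apply, GeneralLinearGroup.scalar_commute, mul_inv_cancel_right]
  rw [weylInvolution, map_mul, MulAut.mul_apply, ← hconj]
  simp only [MulAut.conj_apply, map_mul, map_inv]

/-- The scalar matrix `ζ₅`. -/
def zeta5Scalar : GL (Fin 2) ℂ := GeneralLinearGroup.scalar (Fin 2) zeta5Unit

lemma zeta5Scalar_eq : zeta5Scalar = GeneralLinearGroup.scalar (Fin 2) zeta20 ^ 4 := by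
  rw [zeta5Scalar, ← zeta20_pow_four, map_pow]

lemma zeta5Scalar_notMem :
    zeta5Scalar ∉ oddWeil.range ⊔ Subgroup.zpowers weylInvolution := by
  intro h
  have hle : oddWeil.range ⊔ Subgroup.zpowers weylInvolution ≤
      (GeneralLinearGroup.det ^ 2).ker := by
    refine sup_le ?_ ?_
    · rintro _ ⟨g, rfl⟩
      simp [MonoidHom.mem_ker, det_oddWeil]
    · simp [MonoidHom.mem_ker, det_weylInvolution]
  have hdet : zeta5Unit ^ 4 = 1 := by
    simpa [zeta5Scalar, ← pow_mul, MonoidHom.mem_ker] using hle h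
  exact isPrimitiveRoot_zeta5.pow_ne_one_of_pos_of_lt (by norm_num) (by norm_num)
    (congrArg Units.val hdet)

lemma orderOf_zeta5Scalar : orderOf zeta5Scalar = 5 :=
  orderOf_eq_prime (by rw [zeta5Scalar, ← map_pow, zeta5Unit_pow_five, map_one])
    fun h => zeta5Scalar_notMem (h ▸ one_mem _)

/-- The action of the group of order two on `SL₂(𝔽₅)` by conjugation with the Weyl element. -/
def weylAction : Multiplicative (ZMod 2) →* MulAut SL25 :=
  zmodPowersHom 2 (MulAut.conj weylElement) conj_weylElement_sq

/-- The extension of the odd Weil representation sending the generator of the group of order two to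
`weylInvolution`. -/
def weylExtension : SL25 ⋊[weylAction] Multiplicative (ZMod 2) →* GL (Fin 2) ℂ :=
  cyclicExtensionHom conj_weylElement_sq weylInvolution_sq oddWeil_conj_weylElement

lemma weylExtension_injective : Function.Injective weylExtension :=
  cyclicExtensionHom_injective _ orderOf_weylInvolution _ oddWeil_injective <|
    disjoint_zpowers_of_orderOf_prime (orderOf_weylInvolution.symm ▸ Nat.prime_two)
      weylInvolution_notMem_range_oddWeil

lemma range_weylExtension :
    weylExtension.range = oddWeil.range ⊔ Subgroup.zpowers weylInvolution :=
  range_cyclicExtensionHom _ _ _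

/-- The extension of `weylExtension` sending the generator of the group of order five to `ζ₅`. -/
def scalarExtension : (SL25 ⋊[weylAction] Multiplicative (ZMod 2)) × Multiplicative (ZMod 5) →*
    GL (Fin 2) ℂ :=
  weylExtension.noncommCoprod
    (zmodPowersHom 5 zeta5Scalar (orderOf_zeta5Scalar ▸ pow_orderOf_eq_one _))
    fun x k => by
      obtain ⟨k, rfl⟩ := exists_ofAdd_intCast_eq 5 k
      rw [zmodPowersHom_ofAdd_intCast]
      exact Commute.zpow_right (GeneralLinearGroup.scalar_commute _ _).symm k

lemma scalarExtension_injective : Function.Injective scalarExtension := by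
  refine (MonoidHom.noncommCoprod_injective _ _ _).2
    ⟨weylExtension_injective, zmodPowersHom_injective 5 orderOf_zeta5Scalar, ?_⟩
  rw [range_zmodPowersHom, range_weylExtension]
  exact disjoint_zpowers_of_orderOf_prime (orderOf_zeta5Scalar.symm ▸ Nat.prime_five)
    zeta5Scalar_notMem

lemma range_scalarExtension : scalarExtension.range =
    oddWeil.range ⊔ Subgroup.zpowers (GeneralLinearGroup.scalar (Fin 2) zeta20) := by
  rw [scalarExtension, MonoidHom.noncommCoprod_range, range_weylExtension, range_zmodPowersHom]
  set z := GeneralLinearGroup.scalar (Fin 2) zeta20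
  have hzeta5 : zeta5Scalar = z ^ 4 := zeta5Scalar_eq
  have hweyl : weylInvolution = z ^ 5 * oddWeil weylElement := by rw [weylInvolution, map_pow]
  have hz : z = weylInvolution * (oddWeil weylElement)⁻¹ * zeta5Scalar⁻¹ := by
    rw [hweyl, hzeta5]; group
  refine le_antisymm (sup_le (sup_le le_sup_left ?_) ?_) (sup_le (le_sup_left.trans le_sup_left) ?_)
    <;> rw [Subgroup.zpowers_le]
  · rw [hweyl]
    exact mul_mem (Subgroup.mem_sup_right (Subgroup.npow_mem_zpowers z 5))
      (Subgroup.mem_sup_left ⟨_, rfl⟩)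
  · rw [hzeta5]
    exact Subgroup.mem_sup_right (Subgroup.npow_mem_zpowers z 4)
  · rw [hz]
    have hJ : weylInvolution ∈ oddWeil.range ⊔ Subgroup.zpowers weylInvolution :=
      Subgroup.mem_sup_right (Subgroup.mem_zpowers _)
    exact mul_mem (Subgroup.mem_sup_left (mul_mem hJ (inv_mem (Subgroup.mem_sup_left ⟨_, rfl⟩))))
      (inv_mem (Subgroup.mem_sup_right (Subgroup.mem_zpowers _)))

end Generated

section Image

open BruhatSystem OddWeil

/-- The block-diagonal embedding `emb` as a homomorphism of general linear groups. -/
def blockHom : GL (Fin 2) ℂ →* GL (Fin 3) ℂ :=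
  Units.map
    { toFun := emb
      map_one' := by ext i j; fin_cases i <;> fin_cases j <;> simp [emb]
      map_mul' := fun A B => by
        ext i j
        fin_cases i <;> fin_cases j <;>
          simp [emb, Matrix.mul_apply, Fin.sum_univ_two, Fin.sum_univ_three] }

lemma coe_blockHom (g : GL (Fin 2) ℂ) : (blockHom g : Matrix (Fin 3) (Fin 3) ℂ) = emb g := rfl

/-- The embedding of `GL₂` into `PGL₃` induced by `blockHom`. -/
def projBlockHom : GL (Fin 2) ℂ →* PGL3 := (QuotientGroup.mk' scalarSub).comp blockHom

lemma projBlockHom_injective : Function.Injective projBlockHom := by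
  refine (injective_iff_map_eq_one _).2 fun g hg => ?_
  obtain ⟨c, hc⟩ := (QuotientGroup.eq_one_iff _).1 hg
  have hscalar : algebraMap ℂ (Matrix (Fin 3) (Fin 3) ℂ) c = emb g := congrArg Units.val hc
  have hc : (c : ℂ) = 1 := by
    simpa [emb, algebraMap_matrix_apply] using congrFun₂ hscalar 2 2
  rw [hc, map_one] at hscalar
  ext i j
  have hentry := congrFun₂ hscalar i.castSucc j.castSucc
  fin_cases i <;> fin_cases j <;> simpa [emb] using hentry.symm

lemma gen3_image_coe (S : Set (GL (Fin 3) ℂ)) : gen3 ((↑) '' S) = Subgroup.closure S :=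
  congrArg Subgroup.closure (Set.preimage_image_eq S Units.val_injective)

lemma coe_blockHom_oddWeil_weylElement :
    (blockHom (oddWeil weylElement) : Matrix (Fin 3) (Fin 3) ℂ) = sigma := by
  rw [coe_blockHom, oddWeil, MonoidHom.comp_apply, bruhatSystem_lift_weylElement,
    SpecialLinearGroup.coe_GL_coe_matrix, coe_fourier]
  ext i j
  fin_cases i <;> fin_cases j <;>
    simp [emb, sigma, gauss, div_eq_inv_mul, ← mul_neg]

lemma coe_blockHom_tau : (blockHom (oddWeil (upperUnipotent 1) * zeta5Scalar ^ 3) :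
    Matrix (Fin 3) (Fin 3) ℂ) = tau := by
  have h3 : (3 * 1 : ZMod 5).val = 3 := rfl
  have h2 : (2 * 1 : ZMod 5).val = 2 := rfl
  have h6 : zeta5 ^ 3 * zeta5 ^ 3 = zeta5 := by
    linear_combination zeta5 * zeta5_pow_five
  have h5 : zeta5 ^ 2 * zeta5 ^ 3 = 1 := by rw [← pow_add, zeta5_pow_five]
  rw [coe_blockHom, oddWeil, MonoidHom.comp_apply, bruhatSystem_lift_upperUnipotent, zeta5Scalar,
    Units.val_mul, SpecialLinearGroup.coe_GL_coe_matrix, coe_unipotent, h3, h2, ← map_pow]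
  ext i j
  fin_cases i <;> fin_cases j <;> simp [emb, tau, zeta5Unit, diagonal_pow, h6, h5]

lemma coe_lambda20 :
    ((GeneralLinearGroup.scalar (Fin 3) zeta20 *
      blockHom (GeneralLinearGroup.scalar (Fin 2) zeta20⁻¹) : GL (Fin 3) ℂ) :
      Matrix (Fin 3) (Fin 3) ℂ) = lambda20 := by
  rw [Units.val_mul, coe_blockHom, GeneralLinearGroup.coe_scalar, GeneralLinearGroup.coe_scalar]
  ext i j
  fin_cases i <;> fin_cases j <;> simp [emb, lambda20, zeta20]

lemma scalar_mem_scalarSub (c : ℂˣ) : GeneralLinearGroup.scalar (Fin 3) c ∈ scalarSub :=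
  ⟨c, rfl⟩

lemma map_Gt20 : Gt20.map (QuotientGroup.mk' scalarSub) =
    (Subgroup.closure {oddWeil weylElement, oddWeil (upperUnipotent 1) * zeta5Scalar ^ 3,
      GeneralLinearGroup.scalar (Fin 2) zeta20⁻¹}).map projBlockHom := by
  have hgen : Gt20 = Subgroup.closure {blockHom (oddWeil weylElement),
      blockHom (oddWeil (upperUnipotent 1) * zeta5Scalar ^ 3),
      GeneralLinearGroup.scalar (Fin 3) zeta20 *
        blockHom (GeneralLinearGroup.scalar (Fin 2) zeta20⁻¹)} := by
    rw [Gt20, ← gen3_image_coe]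
    simp only [Set.image_insert_eq, Set.image_singleton,
      coe_blockHom_oddWeil_weylElement, coe_blockHom_tau, coe_lambda20]
  have hscalar : QuotientGroup.mk' scalarSub (GeneralLinearGroup.scalar (Fin 3) zeta20) = 1 :=
    (QuotientGroup.eq_one_iff _).2 (scalar_mem_scalarSub _)
  simp only [hgen, MonoidHom.map_closure, Set.image_insert_eq, Set.image_singleton, map_mul,
    hscalar, one_mul, projBlockHom, MonoidHom.comp_apply]

lemma closure_generators :
    Subgroup.closure {oddWeil weylElement, oddWeil (upperUnipotent 1) * zeta5Scalar ^ 3,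
      GeneralLinearGroup.scalar (Fin 2) zeta20⁻¹} =
    oddWeil.range ⊔ Subgroup.zpowers (GeneralLinearGroup.scalar (Fin 2) zeta20) := by
  rw [map_inv, zeta5Scalar_eq, ← pow_mul, range_oddWeil, closure_mul_pow_inv]

/-- The faithful representation `scalarExtension`, viewed in `PGL₃`, as an isomorphism onto the
image of `Gt20`. -/
def mulEquivMapGt20 : (SL25 ⋊[weylAction] Multiplicative (ZMod 2)) × Multiplicative (ZMod 5) ≃*
    Gt20.map (QuotientGroup.mk' scalarSub) :=
  (MonoidHom.ofInjective (f := projBlockHom.comp scalarExtension)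
    (projBlockHom_injective.comp scalarExtension_injective)).trans <|
  MulEquiv.subgroupCongr <| by
    rw [MonoidHom.range_comp, range_scalarExtension, map_Gt20, closure_generators]

lemma card_specialLinearGroup_zmod_five : Nat.card SL25 = 120 := by
  rw [Nat.card_eq_fintype_card]
  decide +kernel

end Image

end SLTwoFive

theorem stmt16 :
    Nat.card (Gt20.map (QuotientGroup.mk' scalarSub)) = 1200 ∧
    ∃ φ : Multiplicative (ZMod 2) →* MulAut SL25,
      Nonempty (Gt20.map (QuotientGroup.mk' scalarSub) ≃*
        (SL25 ⋊[φ] Multiplicative (ZMod 2)) × Multiplicative (ZMod 5)) := by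
  refine ⟨?_, weylAction, ⟨mulEquivMapGt20.symm⟩⟩
  rw [← Nat.card_congr mulEquivMapGt20.toEquiv, Nat.card_prod, SemidirectProduct.card,
    card_specialLinearGroup_zmod_five]
  simp
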